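/- Let S be an inverse monoid with semilattice of idempotents E and group of units G, and let θ be the natural connection. Then (g⁻¹eg)θ = g⁻¹(eθ)g for every idempotent e ∈ E and every unit g ∈ G. Moreover, if S is factorizable and θ is injective, then an idempotent e is central in S if and only if eθ is a normal subgroup of G. -/

import Mathlib

/-- An inverse monoid: a monoid in which every element `a` has an inverse `a⁻¹`
satisfying `a * a⁻¹ * a = a` and `a⁻¹ * a * a⁻¹ = a⁻¹`, and this inverse is unique. -/
class InverseMonoid (S : Type*) extends Monoid S, Inv S where
  mul_inv_mul : ∀ a : S, a * a⁻¹ * a = a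
  inv_mul_inv : ∀ a : S, a⁻¹ * a * a⁻¹ = a⁻¹
  inv_unique : ∀ a b : S, a * b * a = a → b * a * b = b → b = a⁻¹

/-- An inverse monoid with a (two-sided absorbing) zero element. -/
class InverseMonoidWithZero (S : Type*) extends InverseMonoid S, Zero S where
  zero_mul : ∀ a : S, 0 * a = 0
  mul_zero : ∀ a : S, a * 0 = 0

/-- The natural partial order on an inverse monoid: `a ≤ b` iff `a = e * b`
for some idempotent `e`. -/
def NatLe {S : Type*} [Monoid S] (a b : S) : Prop :=
  ∃ e : S, IsIdempotentElem e ∧ a = e * b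

/-- The filter `e↑ = {s | e ≤ s}` generated by `e`. -/
def upfilter {S : Type*} [Monoid S] (e : S) : Set S := {s | NatLe e s}

/-- `c` is central in (a subset) `T`: it belongs to `T` and commutes with all elements of `T`. -/
def CentralIn {S : Type*} [Mul S] (T : Set S) (c : S) : Prop :=
  c ∈ T ∧ ∀ s ∈ T, c * s = s * c

/-- A monoid is factorizable if every element is a product of an idempotent and a unit. -/
def Factorizable (S : Type*) [Monoid S] : Prop :=
  ∀ s : S, ∃ e g : S, IsIdempotentElem e ∧ IsUnit g ∧ s = e * g

/-- The natural connection `θ`: for an (idempotent) `e`, the subgroup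
`eθ = {g ∈ G : e * g = e}` of the group of units. -/
def natconn {S : Type*} [Monoid S] (e : S) : Subgroup Sˣ where
  carrier := {g : Sˣ | e * (g : S) = e}
  one_mem' := by simp
  mul_mem' := by
    intro a b ha hb
    simp only [Set.mem_setOf_eq, Units.val_mul] at *
    rw [← mul_assoc, ha, hb]
  inv_mem' := by
    intro a ha
    simp only [Set.mem_setOf_eq] at *
    nth_rewrite 1 [← ha]
    rw [mul_assoc, ← Units.val_mul, mul_inv_cancel, Units.val_one, mul_one]

/-- The natural connection is a dual isomorphism from the idempotents onto a
sublattice of the lattice of subgroups of the group of units: it is injective on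
idempotents, order-reversing in both directions, and its image is closed under
joins and meets of subgroups. -/
def NatconnDualIso (S : Type*) [Monoid S] : Prop :=
  (∀ e f : S, IsIdempotentElem e → IsIdempotentElem f → natconn e = natconn f → e = f) ∧
  (∀ e f : S, IsIdempotentElem e → IsIdempotentElem f →
    (NatLe e f ↔ natconn f ≤ natconn e)) ∧
  (∀ e f : S, IsIdempotentElem e → IsIdempotentElem f →
    (∃ h : S, IsIdempotentElem h ∧ natconn h = natconn e ⊔ natconn f) ∧
    (∃ h : S, IsIdempotentElem h ∧ natconn h = natconn e ⊓ natconn f))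

/-- `j` is the join (least upper bound) of `e` and `f` with respect to the natural order. -/
def IsNatJoin {S : Type*} [Monoid S] (e f j : S) : Prop :=
  NatLe e j ∧ NatLe f j ∧ ∀ x : S, NatLe e x → NatLe f x → NatLe j x

/-- `F_{e,f} = f · e↑`. -/
def Fef {S : Type*} [Monoid S] (e f : S) : Set S := (f * ·) '' upfilter e

/-- `UF_{e,f}`: the group of units of the monoid `F_{e,f}` (whose identity is `f`). -/
def UFef {S : Type*} [Monoid S] (e f : S) : Set S :=
  {x ∈ Fef e f | ∃ y ∈ Fef e f, x * y = f ∧ y * x = f}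

/-- The centre of a subset `T`. -/
def ZIn {S : Type*} [Mul S] (T : Set S) : Set S := {x ∈ T | ∀ y ∈ T, x * y = y * x}

/-- Two subsets are isomorphic as semigroups (with the induced multiplication). -/
def SubIso {S : Type*} [Mul S] (A B : Set S) : Prop :=
  ∃ φ : S → S, Set.BijOn φ A B ∧ ∀ a ∈ A, ∀ b ∈ A, φ (a * b) = φ a * φ b

/-- A subcentral idempotent series between `0` and `a`. -/
def IsSubcentralSeriesBetween {S : Type*} [Monoid S] [Zero S] (n : ℕ) (c : ℕ → S) (a : S) :
    Prop :=
  c 0 = 0 ∧ c n = a ∧ (∀ i ≤ n, IsIdempotentElem (c i)) ∧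
    ∀ i < n, CentralIn (upfilter (c i)) (c (i + 1))

/-- A subcentral idempotent series of `S` (between `0` and `1`). -/
def IsSubcentralSeries {S : Type*} [Monoid S] [Zero S] (n : ℕ) (c : ℕ → S) : Prop :=
  IsSubcentralSeriesBetween n c 1

/-- A central idempotent series of `S`. -/
def IsCentralSeries {S : Type*} [Monoid S] [Zero S] (n : ℕ) (c : ℕ → S) : Prop :=
  c 0 = 0 ∧ c n = 1 ∧ (∀ i ≤ n, IsIdempotentElem (c i)) ∧
    (∀ i < n, NatLe (c i) (c (i + 1))) ∧
    ∀ i < n, CentralIn Set.univ (c (i + 1))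

/-- A subcentral idempotent: one occurring in some subcentral idempotent series of `S`. -/
def IsSubcentralIdem {S : Type*} [Monoid S] [Zero S] (e : S) : Prop :=
  ∃ (n : ℕ) (c : ℕ → S), IsSubcentralSeries n c ∧ ∃ i ≤ n, c i = e

/-- A `G`-nilpotent series: a chain of central idempotents from `0` to `1` with
`F_{eᵢ,eᵢ₊₁} ⊆ Z(F_{0,eᵢ₊₁})`. -/
def GNilpotentSeries {S : Type*} [Monoid S] [Zero S] (n : ℕ) (c : ℕ → S) : Prop :=
  c 0 = 0 ∧ c n = 1 ∧ (∀ i ≤ n, IsIdempotentElem (c i) ∧ CentralIn Set.univ (c i)) ∧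
    (∀ i < n, NatLe (c i) (c (i + 1))) ∧
    ∀ i < n, Fef (c i) (c (i + 1)) ⊆ ZIn (Fef 0 (c (i + 1)))

/-- A `G`-solvable series: a chain of central idempotents from `0` to `1` with
each `F_{eᵢ,eᵢ₊₁}` commutative. -/
def GSolvableSeries {S : Type*} [Monoid S] [Zero S] (n : ℕ) (c : ℕ → S) : Prop :=
  c 0 = 0 ∧ c n = 1 ∧ (∀ i ≤ n, IsIdempotentElem (c i) ∧ CentralIn Set.univ (c i)) ∧
    (∀ i < n, NatLe (c i) (c (i + 1))) ∧
    ∀ i < n, ∀ x ∈ Fef (c i) (c (i + 1)), ∀ y ∈ Fef (c i) (c (i + 1)), x * y = y * x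

/-- `S` is `G`-nilpotent. -/
def GNilpotent (S : Type*) [Monoid S] [Zero S] : Prop :=
  ∃ (n : ℕ) (c : ℕ → S), GNilpotentSeries n c

/-- `S` is `G`-solvable. -/
def GSolvable (S : Type*) [Monoid S] [Zero S] : Prop :=
  ∃ (n : ℕ) (c : ℕ → S), GSolvableSeries n c

/-- Two idempotent series are isomorphic: same length, and a one-to-one correspondence
between their factors under which corresponding factors are isomorphic. -/
def SeriesIso {S : Type*} [Monoid S] (n : ℕ) (c : ℕ → S) (n' : ℕ) (d : ℕ → S) : Prop :=
  n = n' ∧ ∃ σ : ℕ → ℕ, Set.BijOn σ {i | i < n} {i | i < n'} ∧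
    ∀ i < n, SubIso (Fef (c i) (c (i + 1))) (Fef (d (σ i)) (d (σ i + 1)))

/-- A composition series (for a kind `P` of series): it has no repeated terms, and any
refinement of it (of the same kind) only repeats its terms. -/
def IsCompositionOf {S : Type*} (P : ℕ → (ℕ → S) → Prop) (n : ℕ) (c : ℕ → S) : Prop :=
  P n c ∧ (∀ i ≤ n, ∀ j ≤ n, c i = c j → i = j) ∧
    ∀ (m : ℕ) (d : ℕ → S), P m d → (∀ i ≤ n, ∃ j ≤ m, d j = c i) →
      ∀ j ≤ m, ∃ i ≤ n, d j = c i

theorem idem_comm_aux {S : Type*} [InverseMonoid S] (e f : S) (he : e * e = e)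
    (hf : f * f = f) : e * f = f * e := by
  have idem : ∀ e f : S, e * e = e → f * f = f → (e * f) * (e * f) = e * f ∧
      (e * f)⁻¹ = e * f := by
    intro e f he hf
    have h1 := InverseMonoid.mul_inv_mul (e * f)
    have h2 := InverseMonoid.inv_mul_inv (e * f)
    have hu := InverseMonoid.inv_unique (e * f)
    generalize (e * f)⁻¹ = x at *
    have he' : ∀ y, e * (e * y) = e * y := fun y => by rw [← mul_assoc, he]
    have hf' : ∀ y, f * (f * y) = f * y := fun y => by rw [← mul_assoc, hf]
    simp only [mul_assoc] at h1 h2 hu ⊢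
    have h2' : ∀ y, x * (e * (f * (x * y))) = x * y := fun y => by
      have := congrArg (· * y) h2
      simpa only [mul_assoc] using this
    have hx : f * (x * e) = x := by
      apply hu
      · simp only [mul_assoc, he', hf', h1]
      · simp only [mul_assoc, he', hf', h2']
    have hxx : x * x = x := by
      calc x * x = (f * (x * e)) * (f * (x * e)) := by rw [hx]
        _ = f * (x * e) := by simp only [mul_assoc, h2']
        _ = x := hx
    have a1 : x = x⁻¹ := InverseMonoid.inv_unique x x (by rw [hxx, hxx]) (by rw [hxx, hxx])
    have a2 : e * f = x⁻¹ := InverseMonoid.inv_unique x (e * f)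
      (by simpa only [mul_assoc] using h2) (by simpa only [mul_assoc] using h1)
    have a3 : x = e * f := by rw [a2]; exact a1
    refine ⟨?_, a3⟩
    rw [a3] at hxx
    simpa only [mul_assoc] using hxx
  obtain ⟨p1, p2⟩ := idem e f he hf
  obtain ⟨q1, -⟩ := idem f e hf he
  have he' : ∀ y, e * (e * y) = e * y := fun y => by rw [← mul_assoc, he]
  have hf' : ∀ y, f * (f * y) = f * y := fun y => by rw [← mul_assoc, hf]
  have := InverseMonoid.inv_unique (e * f) (f * e)
    (by simp only [mul_assoc, he', hf'] at p1 ⊢; exact p1)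
    (by simp only [mul_assoc, he', hf'] at q1 ⊢; exact q1)
  rw [this, p2]

theorem mem_natconn_aux {S : Type*} [Monoid S] (e : S) (x : Sˣ) :
    x ∈ natconn e ↔ e * (x : S) = e := Iff.rfl

/-- For the natural connection `θ` of an inverse monoid:
`(g⁻¹eg)θ = g⁻¹(eθ)g` for every idempotent `e` and unit `g`; moreover if `S` is
factorizable and `θ` is injective (on idempotents), then an idempotent `e` is central
in `S` iff `eθ` is a normal subgroup of the group of units. -/
theorem stmt_1 {S : Type*} [InverseMonoid S] (e : S) (he : IsIdempotentElem e) :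
    (∀ u x : Sˣ, x ∈ natconn ((↑u⁻¹ : S) * e * (↑u : S)) ↔ u * x * u⁻¹ ∈ natconn e) ∧
    (Factorizable S →
      (∀ a b : S, IsIdempotentElem a → IsIdempotentElem b → natconn a = natconn b → a = b) →
      (CentralIn Set.univ e ↔ (natconn e).Normal)) := by
  have key : ∀ u x : Sˣ, x ∈ natconn ((↑u⁻¹ : S) * e * (↑u : S)) ↔
      u * x * u⁻¹ ∈ natconn e := by
    intro u x
    rw [mem_natconn_aux, mem_natconn_aux]
    push_cast
    rw [← mul_assoc, Units.mul_inv_eq_iff_eq_mul, mul_assoc, mul_assoc, mul_assoc,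
      Units.mul_right_inj]
  refine ⟨key, fun hF hinj => ⟨fun hc => ⟨fun n hn g => ?_⟩, fun hN => ⟨trivial, fun s _ => ?_⟩⟩⟩
  · rw [← key]
    have h : (↑g⁻¹ : S) * e * (g : S) = e := by
      rw [mul_assoc, hc.2 _ trivial, Units.inv_mul_cancel_left]
    rwa [h]
  · obtain ⟨f, g, hf, ⟨u, rfl⟩, rfl⟩ := hF s
    have h : (↑u⁻¹ : S) * e * (u : S) = e := by
      apply hinj _ _ _ he
      · ext x
        rw [key]
        exact ⟨fun hx => by simpa [mul_assoc] using hN.conj_mem _ hx u⁻¹,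
          fun hx => hN.conj_mem _ hx u⟩
      · change _ * _ = _
        simp only [mul_assoc, Units.mul_inv_cancel_left]
        rw [← mul_assoc e e, he.eq]
    have h2 : e * (u : S) = u * e := by
      rw [mul_assoc, Units.inv_mul_eq_iff_eq_mul] at h
      exact h
    rw [← mul_assoc, idem_comm_aux e f he hf, mul_assoc, h2, mul_assoc]
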